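/- There exists a constant C > 0 such that for every real δ > √e, every real ε > 0, and every positive integer k with πεk ≤ 2/3, writing K_j = K_j(πεk), the normal Stokes slender-body PDE eigenvalue λⁿ = 2π²εk·(4K₁²K₂ + πεk·K₁·(K₁² − K₀K₂)) / (2K₀K₁K₂ + πεk·(K₁²(K₀ + K₂) − 2K₀²K₂)) and the δ-regularized normal eigenvalue λ^{δ,n} = 8π/(1 + 2·log δ + 2·K₀(δπεk)) satisfy the refined bound |λⁿ − λ^{δ,n}| ≤ C·δ²·(1 + log δ)·ε²·k². -/

import Mathlib

open Real

/-- Modified Bessel function of the second kind of order `j`: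
`K_j(z) = ∫₀^∞ exp (−z cosh t) * cosh (j t) dt`. -/
noncomputable def besselK (j : ℕ) (z : ℝ) : ℝ :=
  ∫ t in Set.Ioi (0 : ℝ), Real.exp (-z * Real.cosh t) * Real.cosh ((j : ℝ) * t)

open MeasureTheory Set Filter Topology

lemma bk_cosh_bd {t : ℝ} (ht : 0 < t) : Real.exp t / 2 ≤ Real.cosh t ∧ Real.cosh t ≤ Real.exp t := by
  have h1 : Real.exp (-t) ≤ Real.exp t := Real.exp_le_exp.2 (by linarith)
  have h2 := Real.exp_pos (-t)
  rw [Real.cosh_eq]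
  constructor <;> linarith

lemma bk_exp_bd {z t : ℝ} (hz : 0 < z) (ht : 0 < t) :
    Real.exp (-z * Real.cosh t) ≤ 384 / z ^ 4 * Real.exp (-(4 * t)) := by
  have hc := (bk_cosh_bd ht).1
  have hpos : 0 < z * Real.exp t / 2 := by positivity
  have h0 : z * Real.exp t / 2 ≤ z * Real.cosh t := by nlinarith
  have h1 := Real.pow_div_factorial_le_exp (z * Real.exp t / 2) hpos.le 4
  have h2 : Real.exp (-z * Real.cosh t) ≤ (Real.exp (z * Real.exp t / 2))⁻¹ := by
    rw [← Real.exp_neg]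
    exact Real.exp_le_exp.2 (by linarith)
  refine h2.trans ?_
  have h3 : (384 / z ^ 4 * Real.exp (-(4 * t))) = ((z * Real.exp t / 2) ^ 4 / (Nat.factorial 4 : ℕ))⁻¹ := by
    have : Real.exp (4 * t) = Real.exp t ^ 4 := by
      rw [← Real.exp_nat_mul]; norm_num
    rw [Real.exp_neg, this]
    have := Real.exp_pos t
    simp [Nat.factorial]
    field_simp
    norm_num
  rw [h3]
  exact inv_anti₀ (by positivity) h1

lemma bk_int {z : ℝ} (hz : 0 < z) (h : ℝ → ℝ) (hc : Continuous h)
    (hb : ∀ t, 0 < t → |h t| ≤ Real.exp (2 * t)) :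
    IntegrableOn (fun t => Real.exp (-z * Real.cosh t) * h t) (Ioi 0) := by
  have hi : IntegrableOn (fun t : ℝ => 384 / z ^ 4 * Real.exp (-2 * t)) (Ioi 0) :=
    (integrableOn_exp_mul_Ioi (by norm_num) 0).const_mul _
  refine Integrable.mono' hi ?_ ?_
  · exact (by fun_prop : Continuous (fun t => Real.exp (-z * Real.cosh t) * h t)).aestronglyMeasurable
  · refine (ae_restrict_iff' measurableSet_Ioi).2 (Eventually.of_forall fun t ht => ?_)
    rw [Real.norm_eq_abs, abs_mul, abs_of_pos (Real.exp_pos _)]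
    calc _ ≤ (384 / z ^ 4 * Real.exp (-(4 * t))) * Real.exp (2 * t) :=
          mul_le_mul (bk_exp_bd hz ht) (hb t ht) (abs_nonneg _) (by positivity)
      _ = _ := by rw [mul_assoc, ← Real.exp_add]; ring_nf

lemma bk_one_le {t : ℝ} (ht : 0 < t) : |(1:ℝ)| ≤ Real.exp (2 * t) := by
  rw [abs_one]; exact Real.one_le_exp (by linarith)

lemma bk_cosh_le {t : ℝ} (ht : 0 < t) : |Real.cosh t| ≤ Real.exp (2 * t) := by
  rw [abs_of_pos (Real.cosh_pos t)]
  exact (bk_cosh_bd ht).2.trans (Real.exp_le_exp.2 (by linarith))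

lemma bk_sinh2_le {t : ℝ} (ht : 0 < t) : |Real.sinh t ^ 2| ≤ Real.exp (2 * t) := by
  rw [abs_of_nonneg (by positivity)]
  have h := (bk_cosh_bd ht).2
  have h2 := Real.cosh_sq t
  have h3 : Real.exp (2 * t) = Real.exp t ^ 2 := by
    rw [← Real.exp_nat_mul]; norm_num
  have := Real.cosh_pos t
  rw [h3]
  nlinarith

lemma bk_int0 {z : ℝ} (hz : 0 < z) :
    IntegrableOn (fun t => Real.exp (-z * Real.cosh t)) (Ioi 0) := by
  simpa using bk_int hz (fun _ => 1) continuous_const (fun t ht => bk_one_le ht)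

lemma bk_int1 {z : ℝ} (hz : 0 < z) :
    IntegrableOn (fun t => Real.exp (-z * Real.cosh t) * Real.cosh t) (Ioi 0) :=
  bk_int hz _ Real.continuous_cosh (fun t ht => bk_cosh_le ht)

lemma bk_intS {z : ℝ} (hz : 0 < z) :
    IntegrableOn (fun t => Real.exp (-z * Real.cosh t) * Real.sinh t ^ 2) (Ioi 0) :=
  bk_int hz _ (by fun_prop) (fun t ht => bk_sinh2_le ht)

lemma bk0 (z : ℝ) : besselK 0 z = ∫ t in Ioi (0:ℝ), Real.exp (-z * Real.cosh t) := by
  simp [besselK]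

lemma bk1 (z : ℝ) : besselK 1 z = ∫ t in Ioi (0:ℝ), Real.exp (-z * Real.cosh t) * Real.cosh t := by
  simp [besselK]

lemma bk0_nonneg (z : ℝ) : 0 ≤ besselK 0 z := by
  rw [bk0]; exact integral_nonneg fun t => (Real.exp_pos _).le

lemma bk0_anti {x y : ℝ} (hx : 0 < x) (hxy : x ≤ y) : besselK 0 y ≤ besselK 0 x := by
  rw [bk0, bk0]
  refine integral_mono (bk_int0 (hx.trans_le hxy)) (bk_int0 hx) fun t => Real.exp_le_exp.2 ?_
  have := Real.cosh_pos t
  nlinarith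

lemma bk0_le_bk1 {z : ℝ} (hz : 0 < z) : besselK 0 z ≤ besselK 1 z := by
  rw [bk0, bk1]
  refine integral_mono (bk_int0 hz) (bk_int1 hz) fun t => ?_
  exact le_mul_of_one_le_right (Real.exp_pos _).le (Real.one_le_cosh t)

lemma bk_ibp {z : ℝ} (hz : 0 < z) :
    besselK 1 z = z * ∫ t in Ioi (0:ℝ), Real.exp (-z * Real.cosh t) * Real.sinh t ^ 2 := by
  have hd : ∀ t : ℝ, HasDerivAt (fun t => Real.exp (-z * Real.cosh t) * Real.sinh t)
      (Real.exp (-z * Real.cosh t) * Real.cosh t -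
        z * (Real.exp (-z * Real.cosh t) * Real.sinh t ^ 2)) t := by
    intro t
    have h1 := (((Real.hasDerivAt_cosh t).const_mul (-z)).exp).mul (Real.hasDerivAt_sinh t)
    refine h1.congr_deriv ?_
    ring
  have hlim : Tendsto (fun t => Real.exp (-z * Real.cosh t) * Real.sinh t) atTop (𝓝 0) := by
    have h0 : Tendsto (fun t : ℝ => 384 / z ^ 4 * Real.exp (-t)) atTop (𝓝 0) := by
      simpa using (Real.tendsto_exp_neg_atTop_nhds_zero).const_mul (384 / z ^ 4)
    refine squeeze_zero_norm' ?_ h0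
    filter_upwards [eventually_gt_atTop 0] with t ht
    have hs : |Real.sinh t| ≤ Real.exp t := by
      rw [abs_of_pos (Real.sinh_pos_iff.2 ht)]
      exact (Real.sinh_lt_cosh t).le.trans (bk_cosh_bd ht).2
    rw [Real.norm_eq_abs, abs_mul, abs_of_pos (Real.exp_pos _)]
    calc _ ≤ (384 / z ^ 4 * Real.exp (-(4 * t))) * Real.exp t :=
          mul_le_mul (bk_exp_bd hz ht) hs (abs_nonneg _) (by positivity)
      _ = 384 / z ^ 4 * Real.exp (-(3 * t)) := by rw [mul_assoc, ← Real.exp_add]; ring_nf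
      _ ≤ _ := by
        have : Real.exp (-(3 * t)) ≤ Real.exp (-t) := Real.exp_le_exp.2 (by linarith)
        gcongr
  have h := integral_Ioi_of_hasDerivAt_of_tendsto' (a := 0) (fun t _ => hd t)
    ((bk_int1 hz).sub ((bk_intS hz).const_mul z)) hlim
  rw [integral_sub (bk_int1 hz) ((bk_intS hz).const_mul z), integral_const_mul, ← bk1] at h
  rw [Real.sinh_zero, mul_zero, sub_zero] at h
  linarith

lemma bk2_eq {z : ℝ} (hz : 0 < z) : z * besselK 2 z = z * besselK 0 z + 2 * besselK 1 z := by
  have h : besselK 2 z = besselK 0 z +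
      2 * ∫ t in Ioi (0:ℝ), Real.exp (-z * Real.cosh t) * Real.sinh t ^ 2 := by
    rw [bk0, ← integral_const_mul, ← integral_add (bk_int0 hz) ((bk_intS hz).const_mul 2)]
    unfold besselK
    congr 1
    funext t
    have := Real.cosh_sq t
    push_cast
    rw [Real.cosh_two_mul, this]
    ring
  rw [h, bk_ibp hz]; ring

lemma bk_sinh_int {z : ℝ} (hz : 0 < z) :
    IntegrableOn (fun t => z * Real.cosh t * Real.exp (-z * Real.sinh t)) (Ioi 0) ∧
    ∫ t in Ioi (0:ℝ), z * Real.cosh t * Real.exp (-z * Real.sinh t) = 1 := by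
  have hd : ∀ t : ℝ, HasDerivAt (fun t => -Real.exp (-z * Real.sinh t))
      (z * Real.cosh t * Real.exp (-z * Real.sinh t)) t := by
    intro t
    refine (((Real.hasDerivAt_sinh t).const_mul (-z)).exp).neg.congr_deriv ?_
    ring
  have hs : Tendsto Real.sinh atTop atTop :=
    tendsto_atTop_mono' _ ((eventually_ge_atTop 0).mono fun t ht => Real.self_le_sinh_iff.2 ht)
      tendsto_id
  have hlim : Tendsto (fun t => -Real.exp (-z * Real.sinh t)) atTop (𝓝 0) := by
    have : Tendsto (fun t => -z * Real.sinh t) atTop atBot :=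
      hs.const_mul_atTop_of_neg (by linarith)
    simpa using (Real.tendsto_exp_atBot.comp this).neg
  have hi := integrableOn_Ioi_deriv_of_nonneg' (a := 0) (fun t _ => hd t)
    (fun t _ => by have := Real.cosh_pos t; positivity) hlim
  refine ⟨hi, ?_⟩
  rw [integral_Ioi_of_hasDerivAt_of_tendsto' (a := 0) (fun t _ => hd t) hi hlim]
  simp

lemma bk_split (z t : ℝ) : Real.exp (-z * Real.cosh t) =
    Real.exp (-z * Real.sinh t) * Real.exp (-(z * Real.exp (-t))) := by
  rw [← Real.exp_add, ← Real.cosh_sub_sinh]; ring_nf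

lemma bk_b_ge {z : ℝ} (hz : 0 < z) : 1 - z ≤ z * besselK 1 z := by
  have h := bk_sinh_int hz
  have h2 : Real.exp (-z) * 1 ≤ z * besselK 1 z := by
    rw [bk1, ← h.2, ← integral_const_mul, ← integral_const_mul]
    refine setIntegral_mono_on (h.1.const_mul _) ((bk_int1 hz).const_mul z) measurableSet_Ioi
      fun t ht => ?_
    rw [bk_split]
    have h3 : Real.exp (-z) ≤ Real.exp (-(z * Real.exp (-t))) := by
      have : Real.exp (-t) ≤ 1 := Real.exp_le_one_iff.2 (by simpa using (le_of_lt ht : (0:ℝ) ≤ t))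
      exact Real.exp_le_exp.2 (by nlinarith)
    have hc := Real.cosh_pos t
    have : 0 ≤ z * Real.cosh t * Real.exp (-z * Real.sinh t) := by positivity
    nlinarith
  have := Real.add_one_le_exp (-z)
  linarith

lemma bk_b_le {z : ℝ} (hz : 0 < z) : z * besselK 1 z ≤ 1 := by
  have h := bk_sinh_int hz
  rw [bk1, ← h.2, ← integral_const_mul]
  refine integral_mono ((bk_int1 hz).const_mul z) h.1 fun t => ?_
  have h3 : Real.exp (-z * Real.cosh t) ≤ Real.exp (-z * Real.sinh t) :=
    Real.exp_le_exp.2 (by have := Real.sinh_lt_cosh t; nlinarith)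
  have hc := Real.cosh_pos t
  have : 0 ≤ z * Real.cosh t := by positivity
  show z * (Real.exp (-z * Real.cosh t) * Real.cosh t) ≤ z * Real.cosh t * Real.exp (-z * Real.sinh t)
  nlinarith

lemma bk_b_close {z : ℝ} (hz : 0 < z) (hz1 : z ≤ 1) :
    1 - z * besselK 1 z ≤ 3 * z ^ 2 * besselK 0 z := by
  have h := bk_sinh_int hz
  rw [bk1, ← h.2, ← integral_const_mul, ← integral_sub h.1 ((bk_int1 hz).const_mul z), bk0,
    ← integral_const_mul]
  refine setIntegral_mono_on (h.1.sub ((bk_int1 hz).const_mul z)) ((bk_int0 hz).const_mul _)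
    measurableSet_Ioi fun t ht => ?_
  have ht : 0 < t := ht
  have hs : Real.exp (-z * Real.sinh t) =
      Real.exp (-z * Real.cosh t) * Real.exp (z * Real.exp (-t)) := by
    rw [← Real.exp_add, ← Real.cosh_sub_sinh]; ring_nf
  rw [hs]
  set E := Real.exp (-z * Real.cosh t)
  have hE : 0 < E := Real.exp_pos _
  set q := Real.exp (-t) with hq
  have hq0 : 0 < q := Real.exp_pos _
  have hq1 : q ≤ 1 := Real.exp_le_one_iff.2 (by linarith)
  have hcq : Real.cosh t * q ≤ 1 := by
    calc Real.cosh t * q ≤ Real.exp t * q := by have := (bk_cosh_bd ht).2; gcongr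
      _ = 1 := by rw [hq, ← Real.exp_add]; simp
  have hx : Real.exp (z * q) - 1 ≤ 3 * (z * q) := by
    have h1 : z * q ≤ 1 := by nlinarith
    have h2 := Real.add_one_le_exp (-(z * q))
    have h3 : Real.exp (z * q) * Real.exp (-(z * q)) = 1 := by rw [← Real.exp_add]; simp
    have h4 : Real.exp (z * q) ≤ 3 := (Real.exp_le_exp.2 h1).trans Real.exp_one_lt_three.le
    have h5 := Real.exp_pos (z * q)
    have h6 : 0 < z * q := by positivity
    nlinarith
  have hc := Real.cosh_pos t
  calc z * Real.cosh t * (E * Real.exp (z * q)) - z * (E * Real.cosh t)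
      = z * Real.cosh t * E * (Real.exp (z * q) - 1) := by ring
    _ ≤ z * Real.cosh t * E * (3 * (z * q)) := by gcongr
    _ = 3 * z ^ 2 * E * (Real.cosh t * q) := by ring
    _ ≤ 3 * z ^ 2 * E * 1 := by gcongr
    _ = _ := by ring

lemma bk_deriv {z : ℝ} (hz : 0 < z) : HasDerivAt (besselK 0) (-besselK 1 z) z := by
  have key := hasDerivAt_integral_of_dominated_loc_of_deriv_le
    (μ := volume.restrict (Ioi (0:ℝ))) (x₀ := z) (s := Metric.ball z (z / 2))
    (F := fun x t => Real.exp (-x * Real.cosh t))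
    (F' := fun x t => -(Real.exp (-x * Real.cosh t) * Real.cosh t))
    (bound := fun t => Real.exp (-(z / 2) * Real.cosh t) * Real.cosh t)
    (Metric.ball_mem_nhds z (by linarith))
    (Eventually.of_forall fun x =>
      (by fun_prop : Continuous (fun t => Real.exp (-x * Real.cosh t))).aestronglyMeasurable)
    (bk_int0 hz)
    (by fun_prop : Continuous (fun t => -(Real.exp (-z * Real.cosh t) * Real.cosh t))).aestronglyMeasurable
    (Eventually.of_forall fun t x hx => by
      have hc := Real.cosh_pos t
      rw [Metric.mem_ball, Real.dist_eq, abs_lt] at hx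
      rw [norm_neg, Real.norm_eq_abs, abs_of_pos (by positivity)]
      have : Real.exp (-x * Real.cosh t) ≤ Real.exp (-(z / 2) * Real.cosh t) :=
        Real.exp_le_exp.2 (by nlinarith)
      gcongr)
    (bk_int1 (by linarith))
    (Eventually.of_forall fun t x hx => by
      refine (((hasDerivAt_id x).neg.mul_const (Real.cosh t)).exp).congr_deriv ?_
      simp)
  have h := key.2
  rw [integral_neg, ← bk1] at h
  have he : besselK 0 = fun x => ∫ t in Ioi (0:ℝ), Real.exp (-x * Real.cosh t) := by
    funext x; exact bk0 x
  rw [he]; exact h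

lemma bk_delta_nonneg {z w : ℝ} (hz : 0 < z) (hzw : z ≤ w) :
    Real.log z + besselK 0 z ≤ Real.log w + besselK 0 w := by
  have hd : ∀ x ∈ Icc z w, HasDerivAt (fun x => Real.log x + besselK 0 x) (x⁻¹ + -besselK 1 x) x :=
    fun x hx => (Real.hasDerivAt_log (hz.trans_le hx.1).ne').add (bk_deriv (hz.trans_le hx.1))
  refine monotoneOn_of_deriv_nonneg (convex_Icc z w) (fun x hx => (hd x hx).continuousAt.continuousWithinAt)
    (fun x hx => (hd x (interior_subset hx)).differentiableAt.differentiableWithinAt)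
    (fun x hx => ?_) (left_mem_Icc.2 hzw) (right_mem_Icc.2 hzw) hzw
  have hx' := interior_subset hx
  rw [(hd x hx').deriv]
  have hx0 : 0 < x := hz.trans_le hx'.1
  have := bk_b_le hx0
  have : besselK 1 x ≤ x⁻¹ := by rw [← one_div, le_div_iff₀ hx0]; linarith
  linarith

lemma bk_delta_le {z w : ℝ} (hz : 0 < z) (hzw : z ≤ w) (hw : w ≤ 1) :
    (Real.log w + besselK 0 w) - (Real.log z + besselK 0 z) ≤ 3 / 2 * besselK 0 z * w ^ 2 := by
  set a := besselK 0 z with ha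
  have ha0 : 0 ≤ a := bk0_nonneg z
  have hd : ∀ x ∈ Icc z w, HasDerivAt (fun x => 3 / 2 * a * x ^ 2 - (Real.log x + besselK 0 x))
      (3 * a * x - (x⁻¹ + -besselK 1 x)) x := by
    intro x hx
    refine (((hasDerivAt_pow 2 x).const_mul (3 / 2 * a)).sub
      ((Real.hasDerivAt_log (hz.trans_le hx.1).ne').add (bk_deriv (hz.trans_le hx.1)))).congr_deriv ?_
    push_cast; ring
  have h := monotoneOn_of_deriv_nonneg (convex_Icc z w)
    (fun x hx => (hd x hx).continuousAt.continuousWithinAt)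
    (fun x hx => (hd x (interior_subset hx)).differentiableAt.differentiableWithinAt)
    (fun x hx => by
      have hx' := interior_subset hx
      rw [(hd x hx').deriv]
      have hx0 : 0 < x := hz.trans_le hx'.1
      have h1 := bk_b_close hx0 (hx'.2.trans hw)
      have h2 := bk0_anti hz hx'.1
      have h3 : x⁻¹ - besselK 1 x = (1 - x * besselK 1 x) / x := by field_simp
      have h4 : (1 - x * besselK 1 x) / x ≤ 3 * a * x := by
        rw [div_le_iff₀ hx0]
        refine h1.trans ?_
        have : 0 < x ^ 2 := by positivity
        nlinarith
      linarith) (left_mem_Icc.2 hzw) (right_mem_Icc.2 hzw) hzw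
  have : 0 ≤ 3 / 2 * a * z ^ 2 := by positivity
  simp only at h
  linarith

lemma bk_second {z δ : ℝ} (hz : 0 < z) (hδ : 1 ≤ δ) :
    |8 * π / (1 + 2 * besselK 0 z) - 8 * π / (1 + 2 * Real.log δ + 2 * besselK 0 (δ * z))|
      ≤ 12 * π * (δ ^ 2 * z ^ 2) := by
  have hδ0 : 0 < δ := by linarith
  have hzw : z ≤ δ * z := by nlinarith
  have h1 := bk_delta_nonneg hz hzw
  have h2 := bk_delta_le hz hzw
  have h3 := bk0_anti hz hzw
  rw [Real.log_mul hδ0.ne' hz.ne'] at h1 h2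
  have ha := bk0_nonneg z
  have ha' := bk0_nonneg (δ * z)
  have hl := Real.log_nonneg hδ
  have hπ := Real.pi_pos
  generalize besselK 0 z = a at *
  generalize besselK 0 (δ * z) = a' at *
  generalize Real.log δ = l at *
  have e : 8 * π / (1 + 2 * a) - 8 * π / (1 + 2 * l + 2 * a') =
      16 * π * ((l + a' - a) / ((1 + 2 * a) * (1 + 2 * l + 2 * a'))) := by
    field_simp
    ring
  have hΔ : 0 ≤ l + a' - a := by linarith
  rw [e, abs_of_nonneg (by positivity)]
  have hm : (l + a' - a) / ((1 + 2 * a) * (1 + 2 * l + 2 * a')) ≤ 3 / 4 * (δ ^ 2 * z ^ 2) := by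
    rw [div_le_iff₀ (by positivity)]
    have hP : 0 ≤ a * (l + a') := by positivity
    by_cases hc : δ * z ≤ 1
    · have h4 := h2 hc
      have h5 : 0 ≤ δ ^ 2 * z ^ 2 := by positivity
      have h6 : 2 * a ≤ (1 + 2 * a) * (1 + 2 * l + 2 * a') := by nlinarith
      have := mul_le_mul_of_nonneg_left h6 h5
      nlinarith
    · have h5 : 1 ≤ δ ^ 2 * z ^ 2 := by
        push Not at hc
        rw [← mul_pow]; exact one_le_pow₀ hc.le
      have h6 : 2 * l ≤ (1 + 2 * a) * (1 + 2 * l + 2 * a') := by nlinarith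
      have h7 : 0 ≤ (1 + 2 * a) * (1 + 2 * l + 2 * a') := by positivity
      have := mul_le_mul_of_nonneg_right h5 h7
      nlinarith
  calc _ ≤ 16 * π * (3 / 4 * (δ ^ 2 * z ^ 2)) := by gcongr
    _ = _ := by ring

lemma bk_alg {z a b c : ℝ} (hz : 0 < z) (hz1 : z ≤ 2 / 3) (ha : 0 ≤ a) (hb : 1 / 3 ≤ b)
    (hb1 : b ≤ 1) (hbc : 1 - b ≤ 3 * z ^ 2 * a) (hab : z * a ≤ b) (hc : 2 / 3 ≤ c) (hc3 : c ≤ 3) :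
    0 < 2 * a * b * c + b ^ 2 * c + z ^ 2 * (a * b ^ 2 - 2 * a ^ 2 * c) ∧
    |2 * π * (4 * b ^ 2 * c + z ^ 2 * b * (b ^ 2 - a * c)) /
      (2 * a * b * c + b ^ 2 * c + z ^ 2 * (a * b ^ 2 - 2 * a ^ 2 * c)) - 8 * π / (1 + 2 * a)|
      ≤ 2754 * π * z ^ 2 := by
  have hπ := Real.pi_pos
  have hb0 : 0 < b := by linarith
  have hc0 : 0 < c := by linarith
  have hden : 2 / 27 * (1 + 2 * a) ≤
      2 * a * b * c + b ^ 2 * c + z ^ 2 * (a * b ^ 2 - 2 * a ^ 2 * c) := by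
    have h1 : z ^ 2 * a ^ 2 * c ≤ 2 / 3 * (a * b * c) := by
      have : z * a * (z * a * c) ≤ (z * a) * (b * c) := by gcongr
      have h' : z * (a * b * c) ≤ 2 / 3 * (a * b * c) := by gcongr
      nlinarith
    have h2 : 2 / 9 ≤ b * c := by nlinarith
    have h3 : 2 / 27 ≤ b ^ 2 * c := by nlinarith
    have h4 : 2 / 9 * a ≤ a * b * c := by nlinarith
    have h5 : 0 ≤ z ^ 2 * (a * b ^ 2) := by positivity
    nlinarith
  set D := 2 * a * b * c + b ^ 2 * c + z ^ 2 * (a * b ^ 2 - 2 * a ^ 2 * c) with hD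
  have hDpos : 0 < D := lt_of_lt_of_le (by positivity) hden
  refine ⟨hDpos, ?_⟩
  have e : 2 * π * (4 * b ^ 2 * c + z ^ 2 * b * (b ^ 2 - a * c)) / D - 8 * π / (1 + 2 * a) =
      2 * π * ((8 * a * b * c * (b - 1) + z ^ 2 * ((1 + 2 * a) * b * (b ^ 2 - a * c)
        - 4 * a * (b ^ 2 - 2 * a * c))) / (D * (1 + 2 * a))) := by
    rw [div_sub_div _ _ hDpos.ne' (by positivity), ← mul_div_assoc]
    congr 1
    rw [hD]; ring
  have hbc3 : b * c ≤ 3 := by nlinarith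
  have hB : |8 * a * b * c * (b - 1) + z ^ 2 * ((1 + 2 * a) * b * (b ^ 2 - a * c)
        - 4 * a * (b ^ 2 - 2 * a * c))| ≤ 102 * z ^ 2 * (1 + 2 * a) ^ 2 := by
    have t1 : |8 * a * b * c * (b - 1)| ≤ 72 * a ^ 2 * z ^ 2 := by
      rw [abs_mul, abs_of_nonneg (by positivity : 0 ≤ 8 * a * b * c), abs_of_nonpos (by linarith)]
      calc 8 * a * b * c * -(b - 1) = 8 * a * (b * c) * (1 - b) := by ring
        _ ≤ 8 * a * 3 * (3 * z ^ 2 * a) := by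
          apply mul_le_mul _ hbc (by linarith) (by positivity)
          gcongr
        _ = _ := by ring
    have hac : a * c ≤ 3 * a := by nlinarith
    have hac0 : 0 ≤ a * c := by positivity
    have hb2 : b ^ 2 ≤ 1 := by nlinarith
    have hb20 : 0 ≤ b ^ 2 := by positivity
    have t2 : |(1 + 2 * a) * b * (b ^ 2 - a * c)| ≤ (1 + 2 * a) * 1 * (1 + 3 * a) := by
      rw [abs_mul, abs_of_nonneg (by positivity : 0 ≤ (1 + 2 * a) * b)]
      have : |b ^ 2 - a * c| ≤ 1 + 3 * a := abs_le.2 ⟨by linarith, by linarith⟩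
      gcongr
    have t3 : |4 * a * (b ^ 2 - 2 * a * c)| ≤ 4 * a * (1 + 6 * a) := by
      rw [abs_mul, abs_of_nonneg (by positivity : 0 ≤ 4 * a)]
      have : |b ^ 2 - 2 * a * c| ≤ 1 + 6 * a := abs_le.2 ⟨by linarith, by linarith⟩
      gcongr
    have t4 : |z ^ 2 * ((1 + 2 * a) * b * (b ^ 2 - a * c) - 4 * a * (b ^ 2 - 2 * a * c))| ≤
        z ^ 2 * ((1 + 2 * a) * 1 * (1 + 3 * a) + 4 * a * (1 + 6 * a)) := by
      rw [abs_mul, abs_of_nonneg (by positivity : 0 ≤ z ^ 2)]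
      have := (abs_sub _ _).trans (add_le_add t2 t3)
      gcongr
    refine (abs_add_le _ _).trans ((add_le_add t1 t4).trans ?_)
    have hz2 : 0 ≤ z ^ 2 := by positivity
    have : 72 * a ^ 2 + ((1 + 2 * a) * 1 * (1 + 3 * a) + 4 * a * (1 + 6 * a)) ≤
      102 * (1 + 2 * a) ^ 2 := by nlinarith
    nlinarith [mul_le_mul_of_nonneg_left this hz2]
  rw [e, abs_mul, abs_of_pos (by positivity : 0 < 2 * π), abs_div,
    abs_of_pos (by positivity : 0 < D * (1 + 2 * a))]
  have hq : |8 * a * b * c * (b - 1) + z ^ 2 * ((1 + 2 * a) * b * (b ^ 2 - a * c)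
        - 4 * a * (b ^ 2 - 2 * a * c))| / (D * (1 + 2 * a)) ≤ 1377 * z ^ 2 := by
    rw [div_le_iff₀ (by positivity)]
    refine hB.trans ?_
    have hz2 : 0 ≤ 1377 * z ^ 2 * (1 + 2 * a) := by positivity
    nlinarith [mul_le_mul_of_nonneg_left hden hz2]
  calc _ ≤ 2 * π * (1377 * z ^ 2) := by gcongr
    _ = _ := by ring

lemma bk_first {z : ℝ} (hz : 0 < z) (hz1 : z ≤ 2 / 3) :
    |2 * π * z * ((4 * (besselK 1 z) ^ 2 * besselK 2 z + z * besselK 1 z *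
        ((besselK 1 z) ^ 2 - besselK 0 z * besselK 2 z)) /
      (2 * besselK 0 z * besselK 1 z * besselK 2 z + z * ((besselK 1 z) ^ 2 *
        (besselK 0 z + besselK 2 z) - 2 * (besselK 0 z) ^ 2 * besselK 2 z)))
      - 8 * π / (1 + 2 * besselK 0 z)| ≤ 2754 * π * z ^ 2 := by
  have h1 := bk_b_ge hz
  have h2 := bk_b_le hz
  have h3 := bk_b_close hz (by linarith)
  have h4 := bk0_le_bk1 hz
  have h5 := bk2_eq hz
  have ha := bk0_nonneg z
  generalize besselK 0 z = a at *
  obtain ⟨b, hb⟩ : ∃ b, b = z * besselK 1 z := ⟨_, rfl⟩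
  obtain ⟨c, hc⟩ : ∃ c, c = z ^ 2 * besselK 2 z := ⟨_, rfl⟩
  have hcb : c = z ^ 2 * a + 2 * b := by rw [hc, hb]; linear_combination z * h5
  have hab : z * a ≤ b := by rw [hb]; gcongr
  rw [← hb] at h1 h2 h3
  have hK1 : besselK 1 z = b / z := by rw [hb]; field_simp
  have hK2 : besselK 2 z = c / z ^ 2 := by rw [hc]; field_simp
  have hza : z ^ 2 * a ≤ 1 := by nlinarith
  have hza0 : 0 ≤ z ^ 2 * a := by positivity
  have key := bk_alg hz hz1 ha (by linarith) h2 h3 hab (c := c) (by linarith) (by linarith)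
  rw [hK1, hK2]
  have e : 2 * π * z * ((4 * (b / z) ^ 2 * (c / z ^ 2) + z * (b / z) *
        ((b / z) ^ 2 - a * (c / z ^ 2))) /
      (2 * a * (b / z) * (c / z ^ 2) + z * ((b / z) ^ 2 *
        (a + c / z ^ 2) - 2 * a ^ 2 * (c / z ^ 2)))) =
      2 * π * (4 * b ^ 2 * c + z ^ 2 * b * (b ^ 2 - a * c)) /
      (2 * a * b * c + b ^ 2 * c + z ^ 2 * (a * b ^ 2 - 2 * a ^ 2 * c)) := by
    have hn : 4 * (b / z) ^ 2 * (c / z ^ 2) + z * (b / z) * ((b / z) ^ 2 - a * (c / z ^ 2)) =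
        (4 * b ^ 2 * c + z ^ 2 * b * (b ^ 2 - a * c)) / z ^ 4 := by field_simp
    have hd : 2 * a * (b / z) * (c / z ^ 2) + z * ((b / z) ^ 2 *
        (a + c / z ^ 2) - 2 * a ^ 2 * (c / z ^ 2)) =
        (2 * a * b * c + b ^ 2 * c + z ^ 2 * (a * b ^ 2 - 2 * a ^ 2 * c)) / z ^ 3 := by
      field_simp; ring
    rw [hn, hd]
    have := key.1.ne'
    generalize 2 * a * b * c + b ^ 2 * c + z ^ 2 * (a * b ^ 2 - 2 * a ^ 2 * c) = D at *
    field_simp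
  rw [e]
  exact key.2



theorem delta_reg_stokes_normal_eigenvalue_difference_refined :
    ∃ C : ℝ, 0 < C ∧ ∀ δ : ℝ, Real.sqrt (Real.exp 1) < δ → ∀ ε : ℝ, 0 < ε →
      ∀ k : ℕ, 1 ≤ k → π * ε * (k : ℝ) ≤ 2 / 3 →
      |2 * π ^ 2 * ε * (k : ℝ) *
            ((4 * (besselK 1 (π * ε * (k : ℝ))) ^ 2 * besselK 2 (π * ε * (k : ℝ)) +
                π * ε * (k : ℝ) * besselK 1 (π * ε * (k : ℝ)) *
                  ((besselK 1 (π * ε * (k : ℝ))) ^ 2 -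
                    besselK 0 (π * ε * (k : ℝ)) * besselK 2 (π * ε * (k : ℝ)))) /
              (2 * besselK 0 (π * ε * (k : ℝ)) * besselK 1 (π * ε * (k : ℝ)) *
                  besselK 2 (π * ε * (k : ℝ)) +
                π * ε * (k : ℝ) *
                  ((besselK 1 (π * ε * (k : ℝ))) ^ 2 *
                      (besselK 0 (π * ε * (k : ℝ)) + besselK 2 (π * ε * (k : ℝ))) -
                    2 * (besselK 0 (π * ε * (k : ℝ))) ^ 2 *
                      besselK 2 (π * ε * (k : ℝ))))) -
          8 * π / (1 + 2 * Real.log δ + 2 * besselK 0 (δ * π * ε * (k : ℝ)))| ≤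
        C * δ ^ 2 * (1 + Real.log δ) * ε ^ 2 * (k : ℝ) ^ 2 := by
  refine ⟨2766 * π ^ 3, by positivity, fun δ hδ ε hε k hk hz1 => ?_⟩
  have hk0 : (0:ℝ) < k := by exact_mod_cast hk
  have hπ := Real.pi_pos
  have hδ1 : 1 ≤ δ := by
    refine le_trans ?_ hδ.le
    rw [Real.one_le_sqrt]
    exact Real.one_le_exp zero_le_one
  have e1 : 2 * π ^ 2 * ε * (k:ℝ) = 2 * π * (π * ε * k) := by ring
  have e2 : δ * π * ε * (k:ℝ) = δ * (π * ε * k) := by ring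
  have e3 : 2766 * π ^ 3 * δ ^ 2 * (1 + Real.log δ) * ε ^ 2 * (k:ℝ) ^ 2 =
      2766 * π * (δ ^ 2 * (π * ε * k) ^ 2) * (1 + Real.log δ) := by ring
  rw [e1, e2, e3]
  have hz : 0 < π * ε * (k:ℝ) := by positivity
  generalize π * ε * (k:ℝ) = z at *
  have f1 := bk_first hz hz1
  have f2 := bk_second hz hδ1
  have hl := Real.log_nonneg hδ1
  have h3 := abs_sub_le _ _ _ |>.trans (add_le_add f1 f2)
  refine h3.trans ?_
  have h4 : z ^ 2 ≤ δ ^ 2 * z ^ 2 := le_mul_of_one_le_left (by positivity) (one_le_pow₀ hδ1)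
  calc 2754 * π * z ^ 2 + 12 * π * (δ ^ 2 * z ^ 2)
      ≤ 2754 * π * (δ ^ 2 * z ^ 2) + 12 * π * (δ ^ 2 * z ^ 2) := by gcongr
    _ = 2766 * π * (δ ^ 2 * z ^ 2) * 1 := by ring
    _ ≤ _ := by gcongr; linarith
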